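/- Let E be a stable L^0(F)-module and 𝒫 a family of L^0-seminorms on E, and let 𝒯 be the topology stably induced by 𝒫. Then 𝒯 is stable: for every partition {A_k} of Ω and every sequence {O_k} of nonempty 𝒯-open subsets of E, the set Σ_k 1_{A_k}O_k is 𝒯-open. -/

import Mathlib

open MeasureTheory Filter

noncomputable section

namespace L0Module

variable {Ω : Type*} [MeasurableSpace Ω] (P : Measure Ω)

/-- The ring structure on `L⁰ = L⁰(F)`, the space of a.e. equivalence classes of real-valued
random variables, with pointwise (a.e.) multiplication. -/
noncomputable instance : CommRing (Ω →ₘ[P] ℝ) :=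
  { (inferInstance : AddCommGroup (Ω →ₘ[P] ℝ)),
    (inferInstance : CommMonoid (Ω →ₘ[P] ℝ)) with
    left_distrib := fun f g h => by
      refine AEEqFun.induction_on₃ f g h fun f hf g hg h hh => ?_
      rw [AEEqFun.mk_add_mk, AEEqFun.mk_mul_mk, AEEqFun.mk_mul_mk, AEEqFun.mk_mul_mk,
        AEEqFun.mk_add_mk, AEEqFun.mk_eq_mk]
      filter_upwards with ω
      simp [mul_add]
    right_distrib := fun f g h => by
      refine AEEqFun.induction_on₃ f g h fun f hf g hg h hh => ?_
      rw [AEEqFun.mk_add_mk, AEEqFun.mk_mul_mk, AEEqFun.mk_mul_mk, AEEqFun.mk_mul_mk,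
        AEEqFun.mk_add_mk, AEEqFun.mk_eq_mk]
      filter_upwards with ω
      simp [add_mul]
    zero_mul := fun f => by
      refine AEEqFun.induction_on f fun f hf => ?_
      have h0 : (0 : Ω →ₘ[P] ℝ) = AEEqFun.mk (fun _ => (0 : ℝ)) aestronglyMeasurable_const := rfl
      rw [h0, AEEqFun.mk_mul_mk, AEEqFun.mk_eq_mk]
      filter_upwards with ω
      simp
    mul_zero := fun f => by
      refine AEEqFun.induction_on f fun f hf => ?_
      have h0 : (0 : Ω →ₘ[P] ℝ) = AEEqFun.mk (fun _ => (0 : ℝ)) aestronglyMeasurable_const := rfl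
      rw [h0, AEEqFun.mk_mul_mk, AEEqFun.mk_eq_mk]
      filter_upwards with ω
      simp }

open Classical in
/-- The indicator `1_A` of a (measurable) set, as an element of `L⁰`. -/
noncomputable def ind (A : Set Ω) : Ω →ₘ[P] ℝ :=
  if hA : MeasurableSet A then
    AEEqFun.mk (A.indicator fun _ => (1 : ℝ))
      ((measurable_const.indicator hA).aestronglyMeasurable)
  else 0

/-- A partition of `Ω`: a sequence of pairwise disjoint measurable sets whose union is `Ω`. -/
def IsPartition (A : ℕ → Set Ω) : Prop :=
  (∀ k, MeasurableSet (A k)) ∧ Pairwise (Function.onFun Disjoint A) ∧ (⋃ k, A k) = Set.univ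

/-- `ε ∈ L⁰_{++}`: `ε > 0` almost surely. -/
def L0pos (ε : Ω →ₘ[P] ℝ) : Prop := ∀ᵐ ω ∂P, 0 < ε ω

variable {E : Type*} [AddCommGroup E] [Module (Ω →ₘ[P] ℝ) E]

/-- The `L⁰`-module `E` is stable: every sequence `{x_k}` in `E` has a unique concatenation
along every partition `{A_k}`. -/
def IsStableModule (E : Type*) [AddCommGroup E] [Module (Ω →ₘ[P] ℝ) E] : Prop :=
  ∀ A : ℕ → Set Ω, IsPartition A → ∀ x : ℕ → E,
    ∃! z : E, ∀ k, ind P (A k) • z = ind P (A k) • x k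

/-- The concatenation `Σ_k 1_{A_k} U_k` of a sequence of subsets of `E` along a partition. -/
def concatSet (A : ℕ → Set Ω) (U : ℕ → Set E) : Set E :=
  {x : E | ∀ k, ∃ u ∈ U k, ind P (A k) • x = ind P (A k) • u}

/-- An `L⁰`-seminorm on the `L⁰`-module `E`: nonnegative-valued, absolutely homogeneous over
`L⁰` and subadditive. -/
def IsL0Seminorm (n : E → Ω →ₘ[P] ℝ) : Prop :=
  (∀ x : E, ∀ᵐ ω ∂P, 0 ≤ n x ω) ∧
  (∀ (η : Ω →ₘ[P] ℝ) (x : E), ∀ᵐ ω ∂P, n (η • x) ω = |η ω| * n x ω) ∧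
  (∀ x y : E, ∀ᵐ ω ∂P, n (x + y) ω ≤ n x ω + n y ω)

/-- `L⁰`-convexity of a subset of `E`. -/
def L0Convex (U : Set E) : Prop :=
  ∀ x ∈ U, ∀ y ∈ U, ∀ η : Ω →ₘ[P] ℝ, (∀ᵐ ω ∂P, 0 ≤ η ω ∧ η ω ≤ 1) →
    η • x + (1 - η) • y ∈ U

/-- `L⁰`-absorbency of a subset of `E`. -/
def L0Absorbent (U : Set E) : Prop :=
  ∀ x : E, ∃ η : Ω →ₘ[P] ℝ, L0pos P η ∧ ∃ u ∈ U, x = η • u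

/-- `L⁰`-balancedness of a subset of `E`. -/
def L0Balanced (U : Set E) : Prop :=
  ∀ x ∈ U, ∀ η : Ω →ₘ[P] ℝ, (∀ᵐ ω ∂P, |η ω| ≤ 1) → η • x ∈ U

/-- Stability of a subset of `E`: it contains every concatenation of its elements along
every partition. -/
def IsStableSet (U : Set E) : Prop :=
  ∀ A : ℕ → Set Ω, IsPartition A → ∀ x : ℕ → E, (∀ k, x k ∈ U) →
    ∀ z : E, (∀ k, ind P (A k) • z = ind P (A k) • x k) → z ∈ U

/-- The ball `{ξ : |ξ − η| ≤ ε a.s.}` in `L⁰`. -/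
def L0ball (η ε : Ω →ₘ[P] ℝ) : Set (Ω →ₘ[P] ℝ) :=
  {ξ : Ω →ₘ[P] ℝ | ∀ᵐ ω ∂P, |ξ ω - η ω| ≤ ε ω}

/-- The topology on `L⁰` with neighborhood base `{η + B_ε : ε ∈ L⁰_{++}}` at each `η`,
where `B_ε = {ξ : |ξ| ≤ ε a.s.}`. -/
noncomputable def L0Topology : TopologicalSpace (Ω →ₘ[P] ℝ) where
  IsOpen O := ∀ η ∈ O, ∃ ε : Ω →ₘ[P] ℝ, L0pos P ε ∧ L0ball P η ε ⊆ O
  isOpen_univ := fun η _ => by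
    refine ⟨1, ?_, Set.subset_univ _⟩
    filter_upwards [AEEqFun.coeFn_one (β := ℝ) (μ := P)] with ω h
    rw [h]
    exact one_pos
  isOpen_inter := fun s t hs ht η hη => by
    obtain ⟨ε₁, hε₁, hb₁⟩ := hs η hη.1
    obtain ⟨ε₂, hε₂, hb₂⟩ := ht η hη.2
    refine ⟨ε₁ ⊓ ε₂, ?_, ?_⟩
    · filter_upwards [hε₁, hε₂, AEEqFun.coeFn_inf ε₁ ε₂] with ω h1 h2 h3
      rw [h3]
      exact lt_inf_iff.2 ⟨h1, h2⟩
    · intro ξ hξ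
      constructor
      · refine hb₁ ?_
        filter_upwards [hξ, AEEqFun.coeFn_inf ε₁ ε₂] with ω h1 h2
        rw [h2] at h1
        exact h1.trans inf_le_left
      · refine hb₂ ?_
        filter_upwards [hξ, AEEqFun.coeFn_inf ε₁ ε₂] with ω h1 h2
        rw [h2] at h1
        exact h1.trans inf_le_right
  isOpen_sUnion := fun 𝒮 h η hη => by
    obtain ⟨s, hs, hηs⟩ := hη
    obtain ⟨ε, hε, hb⟩ := h s hs η hηs
    exact ⟨ε, hε, hb.trans (Set.subset_sUnion_of_mem hs)⟩

/-- The stable ball `U_{{F_k},{A_k},ε} = {x : Σ_k 1_{A_k}·max_{‖·‖ ∈ F_k} ‖x‖ ≤ ε}` attached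
to a partition `{A_k}`, a sequence of finite sets of seminorms `{F_k}` and `ε ∈ L⁰_{++}`. -/
def stableBall (A : ℕ → Set Ω) (Fam : ℕ → Set (E → Ω →ₘ[P] ℝ)) (ε : Ω →ₘ[P] ℝ) : Set E :=
  {x : E | ∀ᵐ ω ∂P, ∀ k, ω ∈ A k → ∀ n ∈ Fam k, n x ω ≤ ε ω}

/-- The topology `T` on `E` is stably induced by the family `𝒮` of `L⁰`-seminorms: the sets
`U_{{F_k},{A_k},ε}` (over partitions `{A_k}`, sequences `{F_k}` of nonempty finite subsets of
`𝒮` and `ε ∈ L⁰_{++}`) form a neighborhood base of `0 ∈ E` for `T`. -/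
def StablyInduced (𝒮 : Set (E → Ω →ₘ[P] ℝ)) (T : TopologicalSpace E) : Prop :=
  (∀ (A : ℕ → Set Ω) (Fam : ℕ → Set (E → Ω →ₘ[P] ℝ)) (ε : Ω →ₘ[P] ℝ),
    IsPartition A → (∀ k, (Fam k).Finite ∧ (Fam k).Nonempty ∧ Fam k ⊆ 𝒮) → L0pos P ε →
    stableBall P A Fam ε ∈ @nhds E T 0) ∧
  (∀ V : Set E, V ∈ @nhds E T 0 →
    ∃ (A : ℕ → Set Ω) (Fam : ℕ → Set (E → Ω →ₘ[P] ℝ)) (ε : Ω →ₘ[P] ℝ),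
      IsPartition A ∧ (∀ k, (Fam k).Finite ∧ (Fam k).Nonempty ∧ Fam k ⊆ 𝒮) ∧ L0pos P ε ∧
      stableBall P A Fam ε ⊆ V)

end L0Module

end

open L0Module

/-!
Concatenations of neighborhoods of `0` are neighborhoods of `0`: if `V k` contains a stable ball
with partition `B k`, families `Fam k` and radius `ε k`, then the stable ball with the
refinement `A k ∩ B k j`, the families `Fam k j` and the concatenated radius `Σ_k 1_{A_k} ε_k` lies
in `Σ_k 1_{A_k} V_k`, since `1_{A_k} v` vanishes off `A k` and is controlled by `ε k` on `A k`.
Translating by a point of `Σ_k 1_{A_k} O_k` gives openness.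
-/

namespace L0Module

section Partition

variable {Ω : Type*}

/-- The refinement of a partition `A` that cuts each piece `A k` along its own partition `B k`,
enumerated by the pairing function: the piece with index `Nat.pair k j` is `A k ∩ B k j`. -/
def refinement (A : ℕ → Set Ω) (B : ℕ → ℕ → Set Ω) (m : ℕ) : Set Ω :=
  A m.unpair.1 ∩ B m.unpair.1 m.unpair.2

theorem refinement_pair (A : ℕ → Set Ω) (B : ℕ → ℕ → Set Ω) (k j : ℕ) :
    refinement A B (Nat.pair k j) = A k ∩ B k j := by
  simp only [refinement, Nat.unpair_pair]

variable [MeasurableSpace Ω]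

theorem isPartition_iff_existsUnique_mem {A : ℕ → Set Ω} :
    IsPartition A ↔ (∀ k, MeasurableSet (A k)) ∧ ∀ ω, ∃! k, ω ∈ A k := by
  refine and_congr_right fun _ => ⟨fun ⟨hdisj, hcover⟩ ω => ?_, fun hexists => ⟨?_, ?_⟩⟩
  · obtain ⟨k, hk⟩ := Set.iUnion_eq_univ_iff.1 hcover ω
    exact ⟨k, hk, fun l hl => hdisj.eq (Set.not_disjoint_iff.2 ⟨ω, hl, hk⟩)⟩
  · exact fun k l hkl => Set.disjoint_left.2 fun ω hk hl => hkl ((hexists ω).unique hk hl)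
  · exact Set.iUnion_eq_univ_iff.2 fun ω => (hexists ω).exists

theorem IsPartition.refinement {A : ℕ → Set Ω} {B : ℕ → ℕ → Set Ω} (hA : IsPartition A)
    (hB : ∀ k, IsPartition (B k)) : IsPartition (refinement A B) := by
  simp only [isPartition_iff_existsUnique_mem] at hA hB ⊢
  refine ⟨fun m => (hA.1 _).inter ((hB _).1 _), fun ω => ?_⟩
  obtain ⟨k, hk, hk_unique⟩ := hA.2 ω
  obtain ⟨j, hj, hj_unique⟩ := (hB k).2 ω
  refine ⟨Nat.pair k j, (refinement_pair A B k j).ge ⟨hk, hj⟩, fun m ⟨hmA, hmB⟩ => ?_⟩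
  have hfst : m.unpair.1 = k := hk_unique _ hmA
  have hsnd : m.unpair.2 = j := hj_unique _ (hfst ▸ hmB)
  rw [← hfst, ← hsnd, Nat.pair_unpair]

end Partition

variable {Ω : Type*} [MeasurableSpace Ω] {P : Measure Ω}

theorem coeFn_ind {A : Set Ω} (hA : MeasurableSet A) : ind P A =ᵐ[P] A.indicator 1 := by
  rw [ind, dif_pos hA]
  exact AEEqFun.coeFn_mk _ _

theorem isIdempotentElem_ind {A : Set Ω} (hA : MeasurableSet A) : IsIdempotentElem (ind P A) := by
  refine AEEqFun.ext ?_
  filter_upwards [AEEqFun.coeFn_mul (ind P A) (ind P A), coeFn_ind hA] with ω hmul hind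
  rw [hmul, Pi.mul_apply, hind]
  by_cases hω : ω ∈ A <;> simp [hω]

theorem exists_concat {A : ℕ → Set Ω} (hA : ∀ k, MeasurableSet (A k))
    (hdisj : Pairwise (Function.onFun Disjoint A)) (η : ℕ → Ω →ₘ[P] ℝ) :
    ∃ ζ : Ω →ₘ[P] ℝ, ∀ᵐ ω ∂P, ∀ k, ω ∈ A k → ζ ω = η k ω := by
  obtain ⟨g, hg, hgη⟩ := exists_measurable_piecewise A hA (fun k => η k)
    (fun k => (η k).measurable) fun k l hkl => by simp [(hdisj hkl).inter_eq]
  refine ⟨AEEqFun.mk g hg.aestronglyMeasurable, ?_⟩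
  filter_upwards [AEEqFun.coeFn_mk g hg.aestronglyMeasurable] with ω hω k hk
  rw [hω, hgη k hk]

theorem IsPartition.exists_concat_L0pos {A : ℕ → Set Ω} (hA : IsPartition A)
    {ε : ℕ → Ω →ₘ[P] ℝ} (hε : ∀ k, L0pos P (ε k)) :
    ∃ δ : Ω →ₘ[P] ℝ, L0pos P δ ∧ ∀ᵐ ω ∂P, ∀ k, ω ∈ A k → δ ω = ε k ω := by
  obtain ⟨δ, hδ⟩ := exists_concat hA.1 hA.2.1 ε
  refine ⟨δ, ?_, hδ⟩
  filter_upwards [hδ, ae_all_iff.2 hε] with ω hδω hεω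
  obtain ⟨k, hk⟩ := Set.iUnion_eq_univ_iff.1 hA.2.2 ω
  exact hδω k hk ▸ hεω k

variable {E : Type*} [AddCommGroup E] [Module (Ω →ₘ[P] ℝ) E]

theorem IsL0Seminorm.coeFn_ind_smul {n : E → Ω →ₘ[P] ℝ} (hn : IsL0Seminorm P n) {A : Set Ω}
    (hA : MeasurableSet A) (x : E) : n (ind P A • x) =ᵐ[P] A.indicator (n x) := by
  filter_upwards [hn.2.1 (ind P A) x, coeFn_ind hA] with ω hsmul hind
  by_cases hω : ω ∈ A <;> simp [hsmul, hind, hω]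

theorem ind_smul_mem_stableBall {A : Set Ω} (hA : MeasurableSet A) {B : ℕ → Set Ω}
    {Fam : ℕ → Set (E → Ω →ₘ[P] ℝ)} (hFam : ∀ j, (Fam j).Countable)
    (hsemi : ∀ j, ∀ n ∈ Fam j, IsL0Seminorm P n) {ε : Ω →ₘ[P] ℝ} (hε : ∀ᵐ ω ∂P, 0 ≤ ε ω) {x : E}
    (hx : ∀ᵐ ω ∂P, ω ∈ A → ∀ j, ω ∈ B j → ∀ n ∈ Fam j, n x ω ≤ ε ω) :
    ind P A • x ∈ stableBall P B Fam ε := by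
  have hind : ∀ᵐ ω ∂P, ∀ j, ∀ n ∈ Fam j, n (ind P A • x) ω = A.indicator (n x) ω :=
    ae_all_iff.2 fun j => (ae_ball_iff (hFam j)).2 fun n hn => (hsemi j n hn).coeFn_ind_smul hA x
  filter_upwards [hind, hε, hx] with ω hindω hεω hxω j hj n hn
  rw [hindω j n hn]
  exact Set.indicator_apply_le' (fun hω => hxω hω j hj n hn) fun _ => hεω

theorem mem_concatSet_of_ind_smul_mem {A : ℕ → Set Ω} (hA : ∀ k, MeasurableSet (A k))
    {U : ℕ → Set E} {x : E} (hx : ∀ k, ind P (A k) • x ∈ U k) : x ∈ concatSet P A U :=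
  fun k => ⟨_, hx k, by rw [smul_smul, (isIdempotentElem_ind (hA k)).eq]⟩

theorem add_mem_concatSet {A : ℕ → Set Ω} {O : ℕ → Set E} {x y : E} {u : ℕ → E}
    (hx : ∀ k, ind P (A k) • x = ind P (A k) • u k)
    (hy : y ∈ concatSet P A fun k => (u k + ·) ⁻¹' O k) : x + y ∈ concatSet P A O := by
  intro k
  obtain ⟨w, hw, hyw⟩ := hy k
  exact ⟨u k + w, hw, by rw [smul_add, smul_add, hx, hyw]⟩

theorem stableBall_refinement_subset_concatSet {A : ℕ → Set Ω} (hA : ∀ k, MeasurableSet (A k))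
    {B : ℕ → ℕ → Set Ω} {Fam : ℕ → ℕ → Set (E → Ω →ₘ[P] ℝ)} (hFam : ∀ k j, (Fam k j).Countable)
    (hsemi : ∀ k j, ∀ n ∈ Fam k j, IsL0Seminorm P n) {ε : ℕ → Ω →ₘ[P] ℝ}
    (hε : ∀ k, ∀ᵐ ω ∂P, 0 ≤ ε k ω) {δ : Ω →ₘ[P] ℝ}
    (hδ : ∀ᵐ ω ∂P, ∀ k, ω ∈ A k → δ ω = ε k ω) :
    stableBall P (refinement A B) (fun m => Fam m.unpair.1 m.unpair.2) δ ⊆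
      concatSet P A fun k => stableBall P (B k) (Fam k) (ε k) := by
  intro x hx
  refine mem_concatSet_of_ind_smul_mem hA fun k =>
    ind_smul_mem_stableBall (hA k) (hFam k) (hsemi k) (hε k) ?_
  filter_upwards [hx, hδ] with ω hxω hδω hωA j hωB n hn
  rw [← hδω k hωA]
  exact hxω (Nat.pair k j) ((refinement_pair A B k j).ge ⟨hωA, hωB⟩) n (by rwa [Nat.unpair_pair])

theorem concatSet_mono {A : ℕ → Set Ω} {U V : ℕ → Set E} (hUV : ∀ k, U k ⊆ V k) :
    concatSet P A U ⊆ concatSet P A V :=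
  fun _ hx k => (hx k).imp fun _ hu => ⟨hUV k hu.1, hu.2⟩

theorem StablyInduced.concatSet_mem_nhds_zero {𝒮 : Set (E → Ω →ₘ[P] ℝ)} {T : TopologicalSpace E}
    (hT : StablyInduced P 𝒮 T) (hsemi : ∀ n ∈ 𝒮, IsL0Seminorm P n) {A : ℕ → Set Ω}
    (hA : IsPartition A) {V : ℕ → Set E} (hV : ∀ k, V k ∈ nhds 0) :
    concatSet P A V ∈ nhds 0 := by
  choose B Fam ε hB hFam hε hball using fun k => hT.2 (V k) (hV k)
  obtain ⟨δ, hδ_pos, hδ⟩ := hA.exists_concat_L0pos hε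
  have hnhds : stableBall P (refinement A B) (fun m => Fam m.unpair.1 m.unpair.2) δ ∈ nhds 0 :=
    hT.1 _ _ _ (hA.refinement hB) (fun _ => hFam _ _) hδ_pos
  have hsub := stableBall_refinement_subset_concatSet (B := B) hA.1
    (fun k j => (hFam k j).1.countable) (fun k j n hn => hsemi n ((hFam k j).2.2 hn))
    (fun k => (hε k).mono fun _ => le_of_lt) hδ
  exact mem_of_superset hnhds (hsub.trans (concatSet_mono hball))

end L0Module

theorem stmt_1_general {Ω : Type*} [MeasurableSpace Ω] {P : Measure Ω} {E : Type*}
    [AddCommGroup E] [Module (Ω →ₘ[P] ℝ) E] {𝒮 : Set (E → Ω →ₘ[P] ℝ)}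
    (hsemi : ∀ n ∈ 𝒮, IsL0Seminorm P n) {T : TopologicalSpace E} (hT : StablyInduced P 𝒮 T)
    (htrans : ∀ x : E, nhds x = map (x + ·) (nhds 0)) {A : ℕ → Set Ω} (hA : IsPartition A)
    {O : ℕ → Set E} (hO : ∀ k, IsOpen (O k)) : IsOpen (concatSet P A O) := by
  refine isOpen_iff_mem_nhds.2 fun x hx => ?_
  choose u huO hxu using hx
  have hV (k : ℕ) : (u k + ·) ⁻¹' O k ∈ nhds 0 := by
    rw [← mem_map, ← htrans]
    exact (hO k).mem_nhds (huO k)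
  rw [htrans, mem_map]
  exact mem_of_superset (hT.concatSet_mem_nhds_zero hsemi hA hV) fun y hy =>
    add_mem_concatSet hxu hy

/-- Let `E` be a stable `L⁰(F)`-module, `𝒮` a family of `L⁰`-seminorms on
`E` and `𝒯` the topology stably induced by `𝒮` (the sets `U_{{F_k},{A_k},ε}` form a
neighborhood base of `0` and neighborhoods of any point are the translates). Then `𝒯` is
stable: for every partition `{A_k}` and every sequence `{O_k}` of nonempty open sets, the
concatenation `Σ_k 1_{A_k} O_k` is open. -/
theorem stmt_1 {Ω : Type*} [MeasurableSpace Ω] (P : MeasureTheory.Measure Ω)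
    [MeasureTheory.IsProbabilityMeasure P]
    (E : Type*) [AddCommGroup E] [Module (Ω →ₘ[P] ℝ) E]
    (hstable : IsStableModule P E)
    (𝒮 : Set (E → Ω →ₘ[P] ℝ)) (hsemi : ∀ n ∈ 𝒮, IsL0Seminorm P n)
    (T : TopologicalSpace E) (hT : StablyInduced P 𝒮 T)
    (htrans : ∀ x : E, @nhds E T x = Filter.map (fun y => x + y) (@nhds E T 0)) :
    ∀ A : ℕ → Set Ω, IsPartition A → ∀ O : ℕ → Set E,
      (∀ k, T.IsOpen (O k)) → (∀ k, (O k).Nonempty) →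
      T.IsOpen (concatSet P A O) := by
  exact fun _ hA _ hO _ => stmt_1_general hsemi hT htrans hA hO
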